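/- arXiv:1502.05322 — 3 statements merged into one kernel-verified Lean document; each statement's English description precedes it below -/
import Mathlib

section
/- The following identity holds in ℤ[q][[x]]: Σ_{n≥0} M_{1,3}(1+2n, 1) · xⁿ = Σ_{n≥0} xⁿ q^{n(n+1)/2} (−q;q)_n; that is, the generating series A^{1→3}_1(x,q) of level-3 multiplicities in local Weyl modules of odd highest weight equals Ψ(x,q) = Σ_{n≥0} xⁿ q^{n(n+1)/2} (−q;q)_n. -/
open Polynomial Finset

/-- `IsDemazureFlagMult l D` asserts that `D s n` is the family of graded multiplicities
`[D(l,s) : D(l+1,n)]_q ∈ ℤ[q]` (with `q = X`), extended by zero to negative arguments,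
characterized by the recursions of Biswal–Chari–Schneider–Viswanath. -/
def IsDemazureFlagMult (l : ℤ) (D : ℤ → ℤ → Polynomial ℤ) : Prop :=
  (∀ s n : ℤ, (s < 0 ∨ n < 0 ∨ ¬ (2 ∣ (s - n))) → D s n = 0) ∧
  (∀ j k n : ℤ, 0 ≤ j → 0 ≤ k → k ≤ l → 0 ≤ n → n ≤ l →
    D (2*l*j + k) n = if k = n then (X : Polynomial ℤ) ^ (j*(l*j + n)).toNat else 0) ∧
  (∀ j k n : ℤ, 1 ≤ j → 0 ≤ k → k ≤ l → 0 ≤ n → n ≤ l →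
    D (2*l*j - k) n = if k = n then (X : Polynomial ℤ) ^ (j*(l*j - n)).toNat else 0) ∧
  (∀ s n s₁ s₀ : ℤ, l + 1 ≤ n → 1 ≤ s → 2 ∣ (s - n) → 0 ≤ s₁ → 1 ≤ s₀ → s₀ ≤ l →
    s = l * s₁ + s₀ →
    D s n = (X : Polynomial ℤ) ^ (((s - n)/2).toNat) * D (s - l - 1) (n - l - 1)
          + (X : Polynomial ℤ) ^ ((s₀ * s₁).toNat) * D (s - 2*s₀) n)

/-- `IsMultTower DT M` : given the tower of level-`l` flag multiplicities `DT l`,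
`M l m s n` is the graded multiplicity `[D(l,s) : D(m,n)]_q` of level-`m` Demazure
modules in a level-`m` Demazure flag of `D(l,s)`. -/
def IsMultTower (DT : ℤ → ℤ → ℤ → Polynomial ℤ) (M : ℤ → ℤ → ℤ → ℤ → Polynomial ℤ) : Prop :=
  (∀ l s n : ℤ, M l l s n = if s = n ∧ 0 ≤ s then 1 else 0) ∧
  (∀ l m s n : ℤ, l < m → M l m s n = ∑ p ∈ Finset.Icc (0:ℤ) s, DT l s p * M (l+1) m p n)

theorem aux_sum (e : ℕ → ℕ → Polynomial ℤ)
    (h0 : ∀ N, e (N+1) 0 = X^(2*(N+1)) * e N 0) (h00 : e 0 0 = 1)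
    (hr : ∀ N p, e (N+1) (p+1) = X^(N-p) * e N p + X^(2*(N+1)) * e N (p+1))
    (hz : ∀ p, e 0 (p+1) = 0) (N : ℕ) :
    ∑ p ∈ Finset.range (N+1), e N p * X^(p*(p+1)/2)
      = (X : Polynomial ℤ)^(N*(N+1)/2) * ∏ i ∈ Finset.Icc 1 N, (1 + (X : Polynomial ℤ)^i) := by
  have tri : ∀ p : ℕ, (p+1)*(p+1+1)/2 = p*(p+1)/2 + (p+1) := by
    intro p
    have : (p+1)*(p+1+1) = p*(p+1) + (p+1)*2 := by ring
    rw [this, Nat.add_mul_div_right _ _ (by norm_num)]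
  have van : ∀ N p, N < p → e N p = 0 := by
    intro N
    induction N with
    | zero =>
      intro p hp
      obtain ⟨k, rfl⟩ : ∃ k, p = k+1 := ⟨p-1, by omega⟩
      exact hz k
    | succ N ih =>
      intro p hp
      obtain ⟨k, rfl⟩ : ∃ k, p = k+1 := ⟨p-1, by omega⟩
      rw [hr, ih k (by omega), ih (k+1) (by omega)]; simp
  induction N with
  | zero => simp [h00]
  | succ N ih =>
    have e1 : ∑ p ∈ Finset.range (N+1), e N (p+1) * X^((p+1)*(p+1+1)/2) + e N 0
        = ∑ p ∈ Finset.range (N+1), e N p * X^(p*(p+1)/2) := by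
      have h1 := Finset.sum_range_succ' (fun p => e N p * (X : Polynomial ℤ)^(p*(p+1)/2)) (N+1)
      have h2 := Finset.sum_range_succ (fun p => e N p * (X : Polynomial ℤ)^(p*(p+1)/2)) (N+1)
      rw [van N (N+1) (by omega)] at h2
      simp only [zero_mul, add_zero] at h2
      rw [← h2, h1]; simp
    have e2 : ∀ p ∈ Finset.range (N+1), e (N+1) (p+1) * X^((p+1)*(p+1+1)/2)
        = X^(N+1) * (e N p * X^(p*(p+1)/2))
          + X^(2*(N+1)) * (e N (p+1) * X^((p+1)*(p+1+1)/2)) := by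
      intro p hp
      have hp' : p ≤ N := by simpa [Nat.lt_succ_iff] using hp
      rw [hr, tri]
      obtain ⟨k, rfl⟩ := Nat.exists_eq_add_of_le hp'
      rw [Nat.add_sub_cancel_left]
      ring
    rw [Finset.sum_range_succ', Finset.sum_congr rfl e2, Finset.sum_add_distrib,
      ← Finset.mul_sum, ← Finset.mul_sum, h0]
    rw [Finset.prod_Icc_succ_top (by omega), tri]
    have e3 : ∑ p ∈ Finset.range (N+1), e N (p+1) * X^((p+1)*(p+1+1)/2)
        = ∑ p ∈ Finset.range (N+1), e N p * X^(p*(p+1)/2) - e N 0 := by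
      rw [← e1]; ring
    rw [e3, ih]
    simp only [zero_add, Nat.zero_div, pow_zero, mul_one]
    ring

/-- **Theorem (`A^{1→3}_1(x,q) = Ψ(x,q)`).** In `ℤ[q][[x]]`:
`Σ_{n≥0} M_{1,3}(1+2n,1)·xⁿ = Σ_{n≥0} xⁿ q^{n(n+1)/2} (−q;q)_n`. -/
theorem level1_to_level3_weight1_eq_Psi
    (DT : ℤ → ℤ → ℤ → Polynomial ℤ) (M : ℤ → ℤ → ℤ → ℤ → Polynomial ℤ)
    (hDT : ∀ l : ℤ, 1 ≤ l → IsDemazureFlagMult l (DT l)) (hM : IsMultTower DT M) :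
    PowerSeries.mk (fun n => M 1 3 (1 + 2*(n:ℤ)) 1) =
      PowerSeries.mk (fun n =>
        (X : Polynomial ℤ)^(n*(n+1)/2) * ∏ i ∈ Finset.Icc 1 n, (1 + (X : Polynomial ℤ)^i)) := by
  have hD1 := hDT 1 le_rfl
  have hD2 := hDT 2 (by norm_num)
  obtain ⟨z1, a1, -, r1⟩ := hD1
  obtain ⟨z2, a2, b2, -⟩ := hD2
  obtain ⟨m0, m1⟩ := hM
  have d2 : ∀ p : ℕ, DT 2 (2*(p:ℤ)+1) 1 = X^(p*(p+1)/2) := by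
    intro p
    obtain ⟨j, hj | hj⟩ : ∃ j : ℕ, p = 2*j ∨ p = 2*j+1 := ⟨p/2, by omega⟩
    · have := a2 j 1 1 (by positivity) (by norm_num) (by norm_num) (by norm_num) (by norm_num)
      rw [if_pos rfl] at this
      rw [show (2*(p:ℤ)+1) = 2*2*j+1 by subst hj; push_cast; ring, this]
      congr 1
      have h1 : p*(p+1)/2 = j*(2*j+1) := by
        subst hj
        rw [show 2*j*(2*j+1) = (j*(2*j+1))*2 by ring]; simp
      rw [h1, show ((j:ℤ)*(2*j+1)) = ((j*(2*j+1) : ℕ):ℤ) by push_cast; ring, Int.toNat_natCast]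
    · have := b2 (j+1) 1 1 (by omega) (by norm_num) (by norm_num) (by norm_num) (by norm_num)
      rw [if_pos rfl] at this
      rw [show (2*(p:ℤ)+1) = 2*2*(j+1)-1 by subst hj; push_cast; ring, this]
      congr 1
      have h1 : p*(p+1)/2 = (j+1)*(2*j+1) := by
        subst hj
        rw [show (2*j+1)*(2*j+1+1) = ((j+1)*(2*j+1))*2 by ring]; simp
      rw [h1, show (((j:ℤ)+1)*(2*(j+1)-1)) = (((j+1)*(2*j+1) : ℕ):ℤ) by push_cast; ring,
        Int.toNat_natCast]
  have m2 : ∀ p : ℕ, M 2 3 (2*(p:ℤ)+1) 1 = X^(p*(p+1)/2) := by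
    intro p
    rw [m1 2 3 _ _ (by norm_num), ← d2, Finset.sum_eq_single (1:ℤ)]
    · rw [show (2:ℤ)+1 = 3 by norm_num, m0]; simp
    · intro b _ hb
      rw [show (2:ℤ)+1 = 3 by norm_num, m0, if_neg (by tauto), mul_zero]
    · intro h; exfalso; apply h; rw [Finset.mem_Icc]; omega
  ext1 N
  rw [PowerSeries.coeff_mk, PowerSeries.coeff_mk]
  rw [← aux_sum (fun N p => DT 1 (2*(N:ℤ)+1) (2*(p:ℤ)+1))]
  · rw [m1 1 3 _ _ (by norm_num)]
    symm
    have hinj : Set.InjOn (fun p : ℕ => 2*(p:ℤ)+1) (Finset.range (N+1) : Finset ℕ) := by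
      intro a _ b _ h
      simp only at h
      omega
    rw [show (1:ℤ)+1 = 2 by norm_num]
    have hs : (Finset.range (N+1)).image (fun p : ℕ => 2*(p:ℤ)+1) ⊆ Finset.Icc (0:ℤ) (1+2*N) := by
      intro x hx
      simp only [Finset.mem_image, Finset.mem_range, Finset.mem_Icc] at hx ⊢
      obtain ⟨a, h1, rfl⟩ := hx
      omega
    rw [← Finset.sum_subset hs, Finset.sum_image hinj]
    · apply Finset.sum_congr rfl
      intro p _
      rw [m2, add_comm (1:ℤ)]
    · intro x hx hx'
      rw [z1, zero_mul]
      right; right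
      intro hd
      apply hx'
      simp only [Finset.mem_image, Finset.mem_range, Finset.mem_Icc] at hx ⊢
      exact ⟨((x-1)/2).toNat, by omega, by omega⟩
  · intro N
    have h1 := a1 (N+1) 1 1 (by positivity) (by norm_num) (by norm_num) (by norm_num) (by norm_num)
    have h2 := a1 N 1 1 (by positivity) (by norm_num) (by norm_num) (by norm_num) (by norm_num)
    rw [if_pos rfl] at h1 h2
    simp only [mul_one] at h1 h2
    simp only [Nat.cast_zero, mul_zero, zero_add]
    push_cast
    rw [h1, h2, ← pow_add]
    congr 1
    rw [show ((N:ℤ)+1)*(1*(N+1)+1) = (((N+1)*(N+2) : ℕ):ℤ) by push_cast; ring,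
      show (N:ℤ)*(1*N+1) = ((N*(N+1) : ℕ):ℤ) by push_cast; ring, Int.toNat_natCast,
      Int.toNat_natCast]
    ring
  · have h1 := a1 0 1 1 (by positivity) (by norm_num) (by norm_num) (by norm_num) (by norm_num)
    simpa using h1
  · intro N p
    have := r1 (2*((N+1:ℕ):ℤ)+1) (2*((p+1:ℕ):ℤ)+1) (2*((N+1:ℕ):ℤ)) 1 (by omega) (by omega)
      (by omega) (by omega) le_rfl le_rfl (by omega)
    rw [this]
    congr 2
    · congr 1; omega
    · congr 1 <;> (push_cast; ring)
    · congr 1; omega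
    · congr 1; push_cast; ring
  · intro p
    have := r1 1 (2*((p+1:ℕ):ℤ)+1) 0 1 (by omega) (by omega)
      (by omega) (by omega) le_rfl le_rfl (by omega)
    simp only [Nat.cast_zero, mul_zero, zero_add]
    rw [this, z1 _ _ (Or.inl (by norm_num)), z1 _ _ (Or.inl (by norm_num))]
    simp
end

section
/- The following two identities hold in ℤ[[q]] (both left-hand sums converge coefficientwise since the order of M_{1,3}(2n+1,1) tends to infinity with n): (a) Σ_{n≥0} M_{1,3}(2n+1, 1)(q) = ψ₁(q); (b) q · Σ_{n≥0} qⁿ · M_{1,3}(2n+1, 1)(q) = ψ₀(q). (These are the specializations A^{1→3}_1(1,q) = ψ₁(q) and A^{1→3}_1(q,q) = ψ₀(q)/q of the generating series of level-3 Demazure flag multiplicities of local Weyl modules.) -/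
open Polynomial Finset

/-- Ramanujan's fifth order mock theta function `ψ₀(q) = Σ_{n≥0} q^{(n+1)(n+2)/2}(−q;q)_n`.
Since the `n`-th term has order `(n+1)(n+2)/2 > n`, its `q^k`-coefficient is the (finite)
sum of the `q^k`-coefficients of the terms with `n ≤ k`. -/
noncomputable def mockPsi0 : PowerSeries ℤ :=
  PowerSeries.mk fun k => ∑ n ∈ Finset.range (k+1),
    ((X : Polynomial ℤ)^((n+1)*(n+2)/2) * ∏ i ∈ Finset.Icc 1 n, (1 + (X : Polynomial ℤ)^i)).coeff k

/-- Ramanujan's fifth order mock theta function `ψ₁(q) = Σ_{n≥0} q^{n(n+1)/2}(−q;q)_n`. -/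
noncomputable def mockPsi1 : PowerSeries ℤ :=
  PowerSeries.mk fun k => ∑ n ∈ Finset.range (k+1),
    ((X : Polynomial ℤ)^(n*(n+1)/2) * ∏ i ∈ Finset.Icc 1 n, (1 + (X : Polynomial ℤ)^i)).coeff k


lemma lvl_tri (n : ℕ) : (n+1)*(n+2)/2 = n*(n+1)/2 + (n+1) := by
  have : (n+1)*(n+2) = n*(n+1) + (n+1)*2 := by ring
  rw [this, Nat.add_mul_div_right _ _ (by norm_num)]

lemma lvl_le_tri (n : ℕ) : n ≤ n*(n+1)/2 := by
  rw [Nat.le_div_iff_mul_le (by norm_num)]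
  rcases n with _ | n
  · simp
  · nlinarith

lemma lvl_sum (F : ℤ → Polynomial ℤ) (a : ℕ) :
    ∑ p ∈ Finset.Icc (0:ℤ) (2*(a:ℤ)+1), F p
      = ∑ b ∈ Finset.range (a+1), (F (2*(b:ℤ)) + F (2*(b:ℤ)+1)) := by
  induction a with
  | zero =>
    have : Finset.Icc (0:ℤ) (2*((0:ℕ):ℤ)+1) = {0, 1} := by
      ext x; simp; omega
    rw [this]; simp
  | succ a ih =>
    have : Finset.Icc (0:ℤ) (2*((a+1:ℕ):ℤ)+1)
        = insert (2*((a+1:ℕ):ℤ)+1) (insert (2*((a+1:ℕ):ℤ)) (Finset.Icc (0:ℤ) (2*(a:ℤ)+1))) := by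
      ext x; simp; omega
    rw [this, Finset.sum_insert (by simp <;> omega), Finset.sum_insert (by simp; omega), ih,
      Finset.sum_range_succ _ (a+1)]
    ring

section
variable {D : ℤ → ℤ → Polynomial ℤ}

lemma lvl_two (h : IsDemazureFlagMult 2 D) (r : ℕ) :
    D (2*(r:ℤ)+1) 1 = X ^ (r*(r+1)/2) := by
  obtain ⟨_, h2, h3, _⟩ := h
  rcases Nat.even_or_odd' r with ⟨j, rfl | rfl⟩
  · have := h2 j 1 1 (by omega) (by norm_num) (by norm_num) (by norm_num) (by norm_num)
    rw [if_pos rfl] at this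
    have e : (2*((2*j:ℕ):ℤ)+1) = 2*2*(j:ℤ)+1 := by push_cast; ring
    rw [e, this]
    congr 1
    have e2 : 2*j*(2*j+1)/2 = j*(2*j+1) := by
      rw [mul_assoc, Nat.mul_div_cancel_left _ (by norm_num)]
    rw [e2]
    have : (j:ℤ)*(2*j+1) = ((j*(2*j+1):ℕ):ℤ) := by push_cast; ring
    rw [this, Int.toNat_natCast]
  · have := h3 (j+1) 1 1 (by omega) (by norm_num) (by norm_num) (by norm_num) (by norm_num)
    rw [if_pos rfl] at this
    have e : (2*((2*j+1:ℕ):ℤ)+1) = 2*2*((j:ℤ)+1)-1 := by push_cast; ring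
    rw [e, this]
    congr 1
    have e2 : (2*j+1)*(2*j+1+1)/2 = (j+1)*(2*j+1) := by
      have : (2*j+1)*(2*j+1+1) = 2*((j+1)*(2*j+1)) := by ring
      rw [this, Nat.mul_div_cancel_left _ (by norm_num)]
    rw [e2]
    have : ((j:ℤ)+1)*(2*(j+1)-1) = (((j+1)*(2*j+1):ℕ):ℤ) := by push_cast; ring
    rw [this, Int.toNat_natCast]

lemma lvl_zero (h : IsDemazureFlagMult 1 D) (a : ℕ) :
    D (2*(a:ℤ)+1) 1 = X ^ (a*(a+1)) := by
  have := h.2.1 a 1 1 (by omega) (by norm_num) (by norm_num) (by norm_num) (by norm_num)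
  rw [if_pos rfl] at this
  rw [show 2*(a:ℤ)+1 = 2*1*(a:ℤ)+1 by ring, this]
  congr 1
  have : (a:ℤ)*(1*a+1) = ((a*(a+1):ℕ):ℤ) := by push_cast; ring
  rw [this, Int.toNat_natCast]

lemma lvl_rec (h : IsDemazureFlagMult 1 D) (a b : ℕ) :
    D (2*(a:ℤ)+1) (2*((b+1:ℕ):ℤ)+1)
      = X ^ (((a:ℤ)-b-1).toNat) * D (2*((a:ℤ)-1)+1) (2*(b:ℤ)+1)
        + X ^ (2*a) * D (2*((a:ℤ)-1)+1) (2*((b+1:ℕ):ℤ)+1) := by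
  have := h.2.2.2 (2*(a:ℤ)+1) (2*((b+1:ℕ):ℤ)+1) (2*a) 1 (by push_cast; omega) (by omega)
    (by omega) (by omega) le_rfl le_rfl (by ring)
  rw [this]
  have e1 : ((2*(a:ℤ)+1 - (2*((b+1:ℕ):ℤ)+1))/2) = (a:ℤ)-b-1 := by push_cast; omega
  have e2 : (1 * (2*(a:ℤ))).toNat = 2*a := by omega
  rw [e1, e2]
  congr 3 <;> push_cast <;> ring

lemma lvl_vanish (h : IsDemazureFlagMult 1 D) (a : ℕ) : ∀ b : ℕ, a < b →
    D (2*(a:ℤ)+1) (2*(b:ℤ)+1) = 0 := by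
  induction a with
  | zero =>
    intro b hb
    obtain ⟨b, rfl⟩ : ∃ c, b = c+1 := ⟨b-1, by omega⟩
    rw [lvl_rec h, h.1 _ _ (Or.inl (by simp)), h.1 _ _ (Or.inl (by simp))]
    simp
  | succ a ih =>
    intro b hb
    obtain ⟨b, rfl⟩ : ∃ c, b = c+1 := ⟨b-1, by omega⟩
    rw [lvl_rec h]
    have : ((a+1:ℕ):ℤ)-1 = a := by push_cast; ring
    rw [this, ih b (by omega), ih (b+1) (by omega)]
    simp

lemma lvl_f (h : IsDemazureFlagMult 1 D) (a : ℕ) :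
    ∑ b ∈ Finset.range (a+1), D (2*(a:ℤ)+1) (2*(b:ℤ)+1) * X ^ (b*(b+1)/2)
      = X ^ (a*(a+1)/2) * ∏ i ∈ Finset.Icc 1 a, (1 + (X : Polynomial ℤ)^i) := by
  induction a with
  | zero =>
    have := lvl_zero h 0
    simp at this
    simp [this]
  | succ a ih =>
    rw [Finset.sum_range_succ']
    have key : ∀ b ∈ Finset.range (a+1),
        D (2*((a+1:ℕ):ℤ)+1) (2*((b+1:ℕ):ℤ)+1) * X ^ ((b+1)*(b+1+1)/2)
        = X^(a+1) * (D (2*(a:ℤ)+1) (2*(b:ℤ)+1) * X ^ (b*(b+1)/2))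
        + X^(2*a+2) * (D (2*(a:ℤ)+1) (2*((b+1:ℕ):ℤ)+1) * X ^ ((b+1)*(b+1+1)/2)) := by
      intro b hb
      rw [Finset.mem_range] at hb
      obtain ⟨c, rfl⟩ : ∃ c, a = b + c := ⟨a-b, by omega⟩
      rw [lvl_rec h]
      have : ((b+c+1:ℕ):ℤ)-1 = (b+c:ℕ) := by push_cast; ring
      rw [this]
      have e2 : (((b+c+1:ℕ):ℤ)-b-1).toNat = c := by push_cast; omega
      rw [e2, lvl_tri b]
      ring
    rw [Finset.sum_congr rfl key, Finset.sum_add_distrib, ← Finset.mul_sum, ← Finset.mul_sum, ih]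
    have s2 := Finset.sum_range_succ'
      (fun b : ℕ => D (2*(a:ℤ)+1) (2*(b:ℤ)+1) * X ^ (b*(b+1)/2)) (a+1)
    rw [Finset.sum_range_succ, lvl_vanish h a (a+1) (by omega), ih] at s2
    have z1 := lvl_zero h a
    have z2 := lvl_zero h (a+1)
    simp only [zero_mul, add_zero, Nat.cast_zero, mul_zero, zero_add, Nat.zero_div, pow_zero,
      mul_one] at s2 ⊢
    rw [z1] at s2
    rw [z2, Finset.prod_Icc_succ_top (by omega), lvl_tri a]
    rw [← sub_eq_iff_eq_add] at s2
    rw [← s2]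
    ring

end

lemma lvl_main (DT : ℤ → ℤ → ℤ → Polynomial ℤ) (M : ℤ → ℤ → ℤ → ℤ → Polynomial ℤ)
    (hDT : ∀ l : ℤ, 1 ≤ l → IsDemazureFlagMult l (DT l)) (hM : IsMultTower DT M) (a : ℕ) :
    M 1 3 (2*(a:ℤ)+1) 1
      = X ^ (a*(a+1)/2) * ∏ i ∈ Finset.Icc 1 a, (1 + (X : Polynomial ℤ)^i) := by
  rw [← lvl_f (hDT 1 le_rfl), hM.2 1 3 _ _ (by norm_num), lvl_sum]
  refine Finset.sum_congr rfl fun b _ => ?_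
  rw [(hDT 1 le_rfl).1 _ (2*(b:ℤ)) (Or.inr (Or.inr (by omega))), zero_mul, zero_add]
  congr 1
  rw [show (1:ℤ)+1 = 2 by norm_num, hM.2 2 3 _ _ (by norm_num),
    Finset.sum_eq_single_of_mem (1:ℤ) (by simp)]
  · rw [show (2:ℤ)+1 = 3 by norm_num, hM.1, lvl_two (hDT 2 (by norm_num))]
    simp
  · intro p _ hp
    rw [show (2:ℤ)+1 = 3 by norm_num, hM.1, if_neg (fun h => hp h.1), mul_zero]

lemma lvl_coeff_zero (e k : ℕ) (P : Polynomial ℤ) (h : k < e) :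
    ((X : Polynomial ℤ)^e * P).coeff k = 0 := by
  rw [Polynomial.coeff_X_pow_mul', if_neg (by omega)]

/-- **Theorem (`A^{1→3}_1(1,q) = ψ₁(q)` and `A^{1→3}_1(q,q) = ψ₀(q)/q`).**
In `ℤ[[q]]`: (a) `Σ_{n≥0} M_{1,3}(2n+1,1)(q) = ψ₁(q)`;
(b) `q·Σ_{n≥0} qⁿ·M_{1,3}(2n+1,1)(q) = ψ₀(q)`.
Both sums converge coefficientwise (for each fixed `k` only finitely many `n` contribute). -/
theorem level1_to_level3_weight1_mock_theta
    (DT : ℤ → ℤ → ℤ → Polynomial ℤ) (M : ℤ → ℤ → ℤ → ℤ → Polynomial ℤ)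
    (hDT : ∀ l : ℤ, 1 ≤ l → IsDemazureFlagMult l (DT l)) (hM : IsMultTower DT M) :
    ((∀ k : ℕ, (Function.support fun n : ℕ => (M 1 3 (2*(n:ℤ)+1) 1).coeff k).Finite) ∧
      PowerSeries.mk (fun k => ∑' n : ℕ, (M 1 3 (2*(n:ℤ)+1) 1).coeff k) = mockPsi1) ∧
    ((∀ k : ℕ,
        (Function.support fun n : ℕ => ((X : Polynomial ℤ)^n * M 1 3 (2*(n:ℤ)+1) 1).coeff k).Finite) ∧
      PowerSeries.X *
          PowerSeries.mk (fun k => ∑' n : ℕ, ((X : Polynomial ℤ)^n * M 1 3 (2*(n:ℤ)+1) 1).coeff k)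
        = mockPsi0) := by
  have hm := lvl_main DT M hDT hM
  simp only [hm]
  have z1 : ∀ k n : ℕ, n ∉ Finset.range (k+1) →
      ((X : Polynomial ℤ)^(n*(n+1)/2) * ∏ i ∈ Finset.Icc 1 n, (1 + (X : Polynomial ℤ)^i)).coeff k
        = 0 := by
    intro k n hn
    rw [Finset.mem_range] at hn
    have := lvl_le_tri n
    exact lvl_coeff_zero _ _ _ (by omega)
  have z2 : ∀ k n : ℕ, n ∉ Finset.range (k+1) →
      ((X : Polynomial ℤ)^n * ((X : Polynomial ℤ)^(n*(n+1)/2) *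
        ∏ i ∈ Finset.Icc 1 n, (1 + (X : Polynomial ℤ)^i))).coeff k = 0 := by
    intro k n hn
    rw [Finset.mem_range] at hn
    exact lvl_coeff_zero _ _ _ (by omega)
  refine ⟨⟨fun k => ?_, ?_⟩, fun k => ?_, ?_⟩
  · refine (Finset.range (k+1)).finite_toSet.subset fun n hn => ?_
    by_contra h
    exact hn (z1 k n h)
  · ext k
    rw [mockPsi1, PowerSeries.coeff_mk, PowerSeries.coeff_mk, tsum_eq_sum (z1 k)]
  · refine (Finset.range (k+1)).finite_toSet.subset fun n hn => ?_
    by_contra h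
    exact hn (z2 k n h)
  · ext k
    rw [mockPsi0, PowerSeries.coeff_mk]
    rcases k with _ | k
    · simp
    · rw [PowerSeries.coeff_succ_X_mul, PowerSeries.coeff_mk,
        tsum_eq_sum (s := Finset.range (k+1+1)) (fun n hn => z2 k n (by simp at hn ⊢; omega))]
      refine Finset.sum_congr rfl fun n _ => ?_
      rw [← Polynomial.coeff_X_mul, lvl_tri n]
      congr 1
      ring
end

section
/- For every integer k, the series Ψ_k(q) := Σ_{n≥0} q^{kn + n(n+1)/2}·(−q;q)_n defines a well-defined formal Laurent series in ℤ((q)) (for each fixed power of q only finitely many n contribute, since kn + n(n+1)/2 → ∞), and there exist Laurent polynomials a₀, a₁, b ∈ ℤ[q, q⁻¹] such that Ψ_k(q) = a₀(q)·ψ₀(q) + a₁(q)·ψ₁(q) + b(q) in ℤ((q)). -/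
open Polynomial Finset

/-- The coefficient of `q^d` (`d ∈ ℤ`) of the `n`-th term `q^{kn+n(n+1)/2}·(−q;q)_n` of
`Ψ_k(q) = Σ_{n≥0} q^{kn+n(n+1)/2}(−q;q)_n`. -/
noncomputable def PsiTermCoeff (k : ℤ) (n : ℕ) (d : ℤ) : ℤ :=
  if k*(n:ℤ) + ((n*(n+1)/2 : ℕ) : ℤ) ≤ d then
    (∏ i ∈ Finset.Icc 1 n, (1 + (X : Polynomial ℤ)^i)).coeff
      ((d - (k*(n:ℤ) + ((n*(n+1)/2 : ℕ) : ℤ))).toNat)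
  else 0

theorem tri_two (n : ℕ) : 2 * ((n*(n+1)/2 : ℕ) : ℤ) = (n:ℤ) * (n+1) := by
  have h : 2 * (n*(n+1)/2) = n*(n+1) := Nat.mul_div_cancel' (Nat.even_mul_succ_self n).two_dvd
  exact_mod_cast h

theorem tri_succ (n : ℕ) : (((n+1)*(n+1+1)/2 : ℕ) : ℤ) = ((n*(n+1)/2 : ℕ) : ℤ) + n + 1 := by
  have h1 := tri_two n
  have h2 := tri_two (n+1)
  push_cast at h1 h2 ⊢
  linarith

/-- Coefficients of `(-q;q)_n` extended by zero to the integers. -/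
noncomputable def pochC (n : ℕ) (m : ℤ) : ℤ :=
  if 0 ≤ m then (∏ i ∈ Finset.Icc 1 n, (1 + (X : Polynomial ℤ)^i)).coeff m.toNat else 0

theorem PsiTermCoeff_eq (k : ℤ) (n : ℕ) (d : ℤ) :
    PsiTermCoeff k n d = pochC n (d - (k*(n:ℤ) + ((n*(n+1)/2 : ℕ) : ℤ))) := by
  unfold PsiTermCoeff pochC
  simp only [sub_nonneg]

theorem pochC_succ (n : ℕ) (m : ℤ) : pochC (n+1) m = pochC n m + pochC n (m - (n+1)) := by
  unfold pochC
  rw [Finset.prod_Icc_succ_top (by omega), mul_add, mul_one]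
  by_cases hm : 0 ≤ m
  · rw [if_pos hm, if_pos hm, Polynomial.coeff_add, Polynomial.coeff_mul_X_pow']
    congr 1
    by_cases h : n + 1 ≤ m.toNat
    · rw [if_pos h, if_pos (by omega)]
      congr 1
      omega
    · rw [if_neg h, if_neg (by omega)]
  · rw [if_neg hm, if_neg hm, if_neg (by omega)]
    rfl

theorem PsiTermCoeff_succ (k : ℤ) (n : ℕ) (d : ℤ) :
    PsiTermCoeff k (n+1) d =
      PsiTermCoeff (k+1) n (d - (k+1)) + PsiTermCoeff (k+2) n (d - (k+2)) := by
  rw [PsiTermCoeff_eq, PsiTermCoeff_eq, PsiTermCoeff_eq, pochC_succ, tri_succ]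
  push_cast
  congr 2 <;> ring

theorem PsiTermCoeff_zero (k d : ℤ) : PsiTermCoeff k 0 d = if d = 0 then 1 else 0 := by
  rw [PsiTermCoeff_eq]
  unfold pochC
  simp only [Finset.Icc_eq_empty_of_lt (Nat.zero_lt_one), Finset.prod_empty, Polynomial.coeff_one]
  simp
  split_ifs <;> first | rfl | omega

theorem PsiTermCoeff_of_lt (k : ℤ) (n : ℕ) (d : ℤ)
    (h : d < k*(n:ℤ) + ((n*(n+1)/2 : ℕ) : ℤ)) : PsiTermCoeff k n d = 0 := by
  unfold PsiTermCoeff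
  rw [if_neg (not_le.mpr h)]

theorem Psi_supp (k d : ℤ) : (Function.support fun n : ℕ => PsiTermCoeff k n d).Finite := by
  apply (Set.finite_Iio (2 * k.natAbs + d.natAbs + 1)).subset
  intro n hn
  rw [Function.mem_support] at hn
  by_contra hc
  apply hn
  apply PsiTermCoeff_of_lt
  rw [Set.mem_Iio, not_lt] at hc
  have h2 := tri_two n
  have h3 : (n:ℤ) ≥ 2 * |k| + |d| + 1 := by
    rw [Int.abs_eq_natAbs, Int.abs_eq_natAbs]
    exact_mod_cast hc
  have hk := neg_abs_le k
  have hd := le_abs_self d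
  have hk0 := abs_nonneg k
  have hd0 := abs_nonneg d
  have h4 : (n:ℤ) * (n + 1 + 2 * k - 2) ≥ 0 := by
    apply mul_nonneg <;> linarith
  nlinarith

theorem Psi_summable (k d : ℤ) : Summable fun n : ℕ => PsiTermCoeff k n d :=
  summable_of_hasFiniteSupport (Psi_supp k d)

theorem Psi_bdd (k : ℤ) :
    BddBelow (Function.support fun d : ℤ => ∑' n : ℕ, PsiTermCoeff k n d) := by
  apply HahnSeries.forallLTEqZero_supp_BddBelow _ (-k^2)
  intro d hd
  have : ∀ n : ℕ, PsiTermCoeff k n d = 0 := by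
    intro n
    apply PsiTermCoeff_of_lt
    have h2 := tri_two n
    nlinarith [sq_nonneg ((n:ℤ) + k), sq_nonneg k]
  simp [this]

/-- The Laurent series `Ψ_k`. -/
noncomputable def PsiL (k : ℤ) : LaurentSeries ℤ :=
  HahnSeries.ofSuppBddBelow (fun d : ℤ => ∑' n : ℕ, PsiTermCoeff k n d) (Psi_bdd k)

theorem PsiL_coeff (k d : ℤ) : (PsiL k).coeff d = ∑' n : ℕ, PsiTermCoeff k n d := rfl

theorem PsiL_rec (k : ℤ) : PsiL k = 1 + HahnSeries.single (k+1) (1:ℤ) * PsiL (k+1)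
    + HahnSeries.single (k+2) (1:ℤ) * PsiL (k+2) := by
  ext d
  rw [HahnSeries.coeff_add, HahnSeries.coeff_add, HahnSeries.coeff_single_mul,
    HahnSeries.coeff_single_mul, HahnSeries.coeff_one, PsiL_coeff, PsiL_coeff, PsiL_coeff,
    (Psi_summable k d).tsum_eq_zero_add, PsiTermCoeff_zero]
  simp only [PsiTermCoeff_succ]
  rw [(Psi_summable _ _).tsum_add (Psi_summable _ _)]
  ring

theorem PsiL_zero : PsiL 0 = HahnSeries.ofPowerSeries ℤ ℤ mockPsi1 := by
  ext d
  rw [PowerSeries.coeff_coe, PsiL_coeff]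
  split_ifs with h
  · have : ∀ n : ℕ, PsiTermCoeff 0 n d = 0 := fun n => PsiTermCoeff_of_lt _ _ _ (by omega)
    simp [this]
  · obtain ⟨m, rfl⟩ := Int.eq_ofNat_of_zero_le (not_lt.mp h)
    rw [mockPsi1, PowerSeries.coeff_mk, Int.natAbs_natCast, tsum_eq_sum (s := Finset.range (m+1))]
    · apply Finset.sum_congr rfl
      intro n _
      rw [Polynomial.coeff_X_pow_mul']
      unfold PsiTermCoeff
      by_cases h : n*(n+1)/2 ≤ m
      · rw [if_pos h, if_pos (by omega)]
        congr 1
        omega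
      · rw [if_neg h, if_neg (by omega)]
    · intro n hn
      rw [Finset.mem_range, not_lt] at hn
      apply PsiTermCoeff_of_lt
      have h2 := tri_two n
      have : (n:ℤ) ≥ m + 1 := by exact_mod_cast hn
      nlinarith

theorem PsiL_one :
    HahnSeries.single 1 (1:ℤ) * PsiL 1 = HahnSeries.ofPowerSeries ℤ ℤ mockPsi0 := by
  ext d
  rw [PowerSeries.coeff_coe, HahnSeries.coeff_single_mul, one_mul, PsiL_coeff]
  split_ifs with h
  · have : ∀ n : ℕ, PsiTermCoeff 1 n (d-1) = 0 := fun n => PsiTermCoeff_of_lt _ _ _ (by omega)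
    simp [this]
  · obtain ⟨m, rfl⟩ := Int.eq_ofNat_of_zero_le (not_lt.mp h)
    rw [mockPsi0, PowerSeries.coeff_mk, Int.natAbs_natCast, tsum_eq_sum (s := Finset.range (m+1))]
    · apply Finset.sum_congr rfl
      intro n _
      have ht : (((n+1)*(n+2)/2 : ℕ) : ℤ) = ((n*(n+1)/2 : ℕ) : ℤ) + n + 1 := tri_succ n
      rw [Polynomial.coeff_X_pow_mul']
      unfold PsiTermCoeff
      by_cases h : (n+1)*(n+2)/2 ≤ m
      · rw [if_pos h, if_pos (by omega)]
        congr 1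
        omega
      · rw [if_neg h, if_neg (by omega)]
    · intro n hn
      rw [Finset.mem_range, not_lt] at hn
      apply PsiTermCoeff_of_lt
      omega

/-- Membership in the span of `ψ₀`, `ψ₁`, `1` over Laurent polynomials. -/
def InSpan (F : LaurentSeries ℤ) : Prop :=
  ∃ a₀ a₁ b : LaurentSeries ℤ,
    a₀.support.Finite ∧ a₁.support.Finite ∧ b.support.Finite ∧
    F = a₀ * (HahnSeries.ofPowerSeries ℤ ℤ mockPsi0)
      + a₁ * (HahnSeries.ofPowerSeries ℤ ℤ mockPsi1) + b

theorem fin_add {a b : LaurentSeries ℤ} (ha : a.support.Finite) (hb : b.support.Finite) :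
    (a + b).support.Finite := (ha.union hb).subset (HahnSeries.support_add_subset a b)

theorem fin_mul {a b : LaurentSeries ℤ} (ha : a.support.Finite) (hb : b.support.Finite) :
    (a * b).support.Finite := (ha.add hb).subset HahnSeries.support_mul_subset

theorem fin_single (k c : ℤ) : (HahnSeries.single k c : LaurentSeries ℤ).support.Finite :=
  (Set.finite_singleton k).subset HahnSeries.support_single_subset

theorem fin_zero : (0 : LaurentSeries ℤ).support.Finite := by simp

theorem InSpan.add {F G : LaurentSeries ℤ} (hF : InSpan F) (hG : InSpan G) : InSpan (F + G) := by
  obtain ⟨a, b, c, ha, hb, hc, rfl⟩ := hF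
  obtain ⟨a', b', c', ha', hb', hc', rfl⟩ := hG
  exact ⟨a + a', b + b', c + c', fin_add ha ha', fin_add hb hb', fin_add hc hc', by ring⟩

theorem InSpan.mul {F : LaurentSeries ℤ} (k c : ℤ) (hF : InSpan F) :
    InSpan (HahnSeries.single k c * F) := by
  obtain ⟨a, b, c', ha, hb, hc, rfl⟩ := hF
  exact ⟨HahnSeries.single k c * a, HahnSeries.single k c * b, HahnSeries.single k c * c',
    fin_mul (fin_single _ _) ha, fin_mul (fin_single _ _) hb, fin_mul (fin_single _ _) hc, by ring⟩

theorem InSpan.single (k c : ℤ) : InSpan (HahnSeries.single k c) :=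
  ⟨0, 0, HahnSeries.single k c, fin_zero, fin_zero, fin_single _ _, by ring⟩

theorem InSpan.down {k : ℤ} (h1 : InSpan (PsiL (k+1))) (h2 : InSpan (PsiL (k+2))) :
    InSpan (PsiL k) := by
  rw [PsiL_rec k]
  exact ((InSpan.single 0 1).add (h1.mul _ _)).add (h2.mul _ _)

theorem InSpan.up {k : ℤ} (h0 : InSpan (PsiL k)) (h1 : InSpan (PsiL (k+1))) :
    InSpan (PsiL (k+2)) := by
  have e : PsiL (k+2) = HahnSeries.single (-(k+2)) (1:ℤ) * PsiL k
      + (HahnSeries.single (-(k+2)) (-1:ℤ)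
        + HahnSeries.single (-1) (-1:ℤ) * PsiL (k+1)) := by
    ext d
    have h := congrArg (fun F : LaurentSeries ℤ => F.coeff (d + (k + 2))) (PsiL_rec k)
    have ho : (1 : LaurentSeries ℤ) = HahnSeries.single 0 1 := rfl
    simp only [ho, HahnSeries.coeff_add, HahnSeries.coeff_single_mul, HahnSeries.coeff_single,
      one_mul] at h ⊢
    have e1 : d + (k+2) - (k+1) = d - -1 := by ring
    have e2 : d + (k+2) - (k+2) = d := by ring
    have e3 : d - -(k+2) = d + (k+2) := by ring
    rw [e1, e2] at h
    rw [e3, h]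
    have e4 : (d = -(k+2)) ↔ (d + (k+2) = 0) := by constructor <;> intro _ <;> linarith
    simp only [e4]
    split_ifs <;> ring
  rw [e]
  exact (h0.mul _ _).add ((InSpan.single _ _).add (h1.mul _ _))

theorem InSpan_zero : InSpan (PsiL 0) :=
  ⟨0, HahnSeries.single 0 1, 0, fin_zero, fin_single _ _, fin_zero, by
    rw [PsiL_zero, HahnSeries.single_zero_one]; ring⟩

theorem InSpan_one : InSpan (PsiL 1) :=
  ⟨HahnSeries.single (-1) 1, 0, 0, fin_single _ _, fin_zero, fin_zero, by
    rw [← PsiL_one, ← mul_assoc, HahnSeries.single_mul_single]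
    norm_num⟩

theorem InSpan_all (k : ℤ) : InSpan (PsiL k) ∧ InSpan (PsiL (k+1)) := by
  induction k using Int.induction_on with
  | zero => exact ⟨InSpan_zero, InSpan_one⟩
  | succ i ih =>
    refine ⟨ih.2, ?_⟩
    have := InSpan.up ih.1 ih.2
    rwa [show (i:ℤ) + 1 + 1 = i + 2 by ring]
  | pred i ih =>
    have e : -(i:ℤ) - 1 + 1 = -i := by ring
    have e2 : -(i:ℤ) - 1 + 2 = -i + 1 := by ring
    rw [e]
    refine ⟨InSpan.down ?_ ?_, ih.1⟩
    · rw [e]; exact ih.1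
    · rw [e2]; exact ih.2

/-- **Theorem.** For every `k ∈ ℤ`, the series `Ψ_k(q) = Σ_{n≥0} q^{kn+n(n+1)/2}(−q;q)_n`
is a well-defined formal Laurent series in `ℤ((q))` (for each fixed power of `q` only
finitely many `n` contribute), and `Ψ_k = a₀·ψ₀ + a₁·ψ₁ + b` for some Laurent polynomials
`a₀, a₁, b ∈ ℤ[q,q⁻¹]` (realized as finitely supported Laurent series). -/
theorem Psi_k_in_span_mock_theta (k : ℤ) :
    (∀ d : ℤ, (Function.support fun n : ℕ => PsiTermCoeff k n d).Finite) ∧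
    ∃ F : LaurentSeries ℤ,
      (∀ d : ℤ, F.coeff d = ∑' n : ℕ, PsiTermCoeff k n d) ∧
      ∃ a₀ a₁ b : LaurentSeries ℤ,
        a₀.support.Finite ∧ a₁.support.Finite ∧ b.support.Finite ∧
        F = a₀ * (HahnSeries.ofPowerSeries ℤ ℤ mockPsi0)
          + a₁ * (HahnSeries.ofPowerSeries ℤ ℤ mockPsi1) + b := by
  exact ⟨Psi_supp k, PsiL k, PsiL_coeff k, (InSpan_all k).1⟩
end
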